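/- arXiv:2502.12431 — 2 statements merged into one kernel-verified Lean document; each statement's English description precedes it below -/
import Mathlib

section
/- For any two-sided strategy-proof randomized matching mechanism f, there exists a randomized matching mechanism g that is two-sided strategy-proof and anonymous and satisfies max_{≻∈P} V(g(≻),≻) ≤ max_{≻∈P} V(f(≻),≻), where V(r,≻) denotes the stability violation of r at profile ≻. -/
/-!
Averaging `f` over all renamings `(πS, πC)` of the agents gives an anonymous mechanism, because
composing with a fixed renaming permutes the terms of the average. Each term is again a two-sided
strategy-proof randomized matching mechanism, and its violation at `p` is that of `f` at a renamed
profile. Feasibility, strategy-proofness and an upper bound on the violation all cut out convex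
sets, so they survive averaging.
-/

open Finset

/-- A preference profile: each student `s` has a ranking `p.1 s : Equiv.Perm (Fin m)`
(where `p.1 s c` is the rank student `s` gives to school `c`, lower rank = more preferred),
and each school `c` has a ranking `p.2 c` of the students (lower rank = more preferred). -/
abbrev Profile (n m : ℕ) :=
  (Fin n → Equiv.Perm (Fin m)) × (Fin m → Equiv.Perm (Fin n))

/-- A randomized matching: nonnegative entries, and (accounting for the implicit `∅`
row/column each summing to one) every row and column sums to at most one. -/
def IsRandMatching {n m : ℕ} (r : Fin n → Fin m → ℝ) : Prop :=
  (∀ s c, 0 ≤ r s c) ∧ (∀ s, ∑ c, r s c ≤ 1) ∧ (∀ c, ∑ s, r s c ≤ 1)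

/-- Stability violation of a randomized matching `r` at profile `p`. -/
def violation {n m : ℕ} (p : Profile n m) (r : Fin n → Fin m → ℝ) : ℝ :=
  ∑ s, ∑ c,
    max (1 - r s c
      - ∑ c' ∈ univ.filter (fun c' => p.1 s c' < p.1 s c), r s c'
      - ∑ s' ∈ univ.filter (fun s' => p.2 c s' < p.2 c s), r s' c) 0

/-- Two-sided strategy-proofness of a randomized matching mechanism. -/
def TwoSidedSP {n m : ℕ} (g : Profile n m → Fin n → Fin m → ℝ) : Prop :=
  (∀ p : Profile n m, ∀ s : Fin n, ∀ q : Equiv.Perm (Fin m), ∀ c : Fin m,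
    ∑ c' ∈ univ.filter (fun c' => p.1 s c' ≤ p.1 s c),
        g (Function.update p.1 s q, p.2) s c'
      ≤ ∑ c' ∈ univ.filter (fun c' => p.1 s c' ≤ p.1 s c), g p s c') ∧
  (∀ p : Profile n m, ∀ c : Fin m, ∀ q : Equiv.Perm (Fin n), ∀ s : Fin n,
    ∑ s' ∈ univ.filter (fun s' => p.2 c s' ≤ p.2 c s),
        g (p.1, Function.update p.2 c q) s' c
      ≤ ∑ s' ∈ univ.filter (fun s' => p.2 c s' ≤ p.2 c s), g p s' c)

/-- The relabelled profile `≻^π`: student `πS s` gets student `s`'s old preference with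
schools renamed by `πC`, and school `πC c` gets school `c`'s old preference with students
renamed by `πS`. -/
def relabel {n m : ℕ} (πS : Equiv.Perm (Fin n)) (πC : Equiv.Perm (Fin m))
    (p : Profile n m) : Profile n m :=
  (fun i => πC.symm.trans (p.1 (πS.symm i)),
   fun j => πS.symm.trans (p.2 (πC.symm j)))

/-- Anonymity of a mechanism. -/
def Anonymous {n m : ℕ} (g : Profile n m → Fin n → Fin m → ℝ) : Prop :=
  ∀ p : Profile n m, ∀ πS : Equiv.Perm (Fin n), ∀ πC : Equiv.Perm (Fin m), ∀ s c,
    g p s c = g (relabel πS πC p) (πS s) (πC c)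

open scoped BigOperators

lemma expect_mem_of_convex {𝕜 E ι : Type*} [Field 𝕜] [LinearOrder 𝕜] [IsStrictOrderedRing 𝕜]
    [AddCommGroup E] [Module 𝕜 E] [Module ℚ≥0 E] {A : Set E} (hA : Convex 𝕜 A)
    {t : Finset ι} (ht : t.Nonempty) {u : ι → E} (hu : ∀ i ∈ t, u i ∈ A) :
    𝔼 i ∈ t, u i ∈ A := by
  have hcard : (#t : 𝕜) ≠ 0 := mod_cast ht.card_ne_zero
  have hexpect : 𝔼 i ∈ t, u i = ∑ i ∈ t, (#t : 𝕜)⁻¹ • u i := by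
    rw [expect, ← smul_sum, ← NNRat.cast_smul_eq_nnqsmul 𝕜]
    simp
  rw [hexpect]
  exact hA.sum_mem (fun _ _ => by positivity) (by simp [hcard]) hu

/-- A mechanism, assigning a real matrix to each profile. That these matrices are randomized
matchings is stated separately, so that mechanisms form a vector space. -/
abbrev Mechanism (n m : ℕ) := Profile n m → Fin n → Fin m → ℝ

section Relabel

variable {n m : ℕ} (πS : Equiv.Perm (Fin n)) (πC : Equiv.Perm (Fin m)) (p : Profile n m)

@[simp]
lemma relabel_fst_apply_apply (s : Fin n) (c : Fin m) :
    (relabel πS πC p).1 (πS s) (πC c) = p.1 s c := by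
  simp [relabel]

@[simp]
lemma relabel_snd_apply_apply (s : Fin n) (c : Fin m) :
    (relabel πS πC p).2 (πC c) (πS s) = p.2 c s := by
  simp [relabel]

lemma relabel_update_fst (s : Fin n) (q : Equiv.Perm (Fin m)) :
    relabel πS πC (Function.update p.1 s q, p.2) =
      (Function.update (relabel πS πC p).1 (πS s) (πC.symm.trans q), (relabel πS πC p).2) := by
  refine Prod.ext (funext fun i => ?_) rfl
  simp only [relabel, Function.update_apply, Equiv.symm_apply_eq, apply_ite (πC.symm.trans ·)]

lemma relabel_update_snd (c : Fin m) (q : Equiv.Perm (Fin n)) :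
    relabel πS πC (p.1, Function.update p.2 c q) =
      ((relabel πS πC p).1, Function.update (relabel πS πC p).2 (πC c) (πS.symm.trans q)) := by
  refine Prod.ext rfl (funext fun j => ?_)
  simp only [relabel, Function.update_apply, Equiv.symm_apply_eq, apply_ite (πS.symm.trans ·)]

lemma sum_filter_relabel_fst {M : Type*} [AddCommMonoid M] (R : Fin m → Fin m → Prop)
    [DecidableRel R] (s : Fin n) (c : Fin m) (u : Fin m → M) :
    ∑ c' with R ((relabel πS πC p).1 (πS s) c') ((relabel πS πC p).1 (πS s) (πC c)), u c' =
      ∑ c' with R (p.1 s c') (p.1 s c), u (πC c') :=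
  (sum_equiv πC (by simp) (by simp)).symm

lemma sum_filter_relabel_snd {M : Type*} [AddCommMonoid M] (R : Fin n → Fin n → Prop)
    [DecidableRel R] (s : Fin n) (c : Fin m) (u : Fin n → M) :
    ∑ s' with R ((relabel πS πC p).2 (πC c) s') ((relabel πS πC p).2 (πC c) (πS s)), u s' =
      ∑ s' with R (p.2 c s') (p.2 c s), u (πS s') :=
  (sum_equiv πS (by simp) (by simp)).symm

lemma violation_relabel (r : Fin n → Fin m → ℝ) :
    violation (relabel πS πC p) r = violation p (fun s c => r (πS s) (πC c)) := by
  refine (Fintype.sum_equiv πS _ _ fun s => Fintype.sum_equiv πC _ _ fun c => ?_).symm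
  rw [sum_filter_relabel_fst πS πC p (· < ·), sum_filter_relabel_snd πS πC p (· < ·)]

variable {πS πC} in
lemma IsRandMatching.comp_perm {r : Fin n → Fin m → ℝ} (hr : IsRandMatching r) :
    IsRandMatching (fun s c => r (πS s) (πC c)) := by
  obtain ⟨hnonneg, hrow, hcol⟩ := hr
  exact ⟨fun s c => hnonneg _ _,
    fun s => (Equiv.sum_comp πC (r (πS s))).trans_le (hrow _),
    fun c => (Equiv.sum_comp πS (r · (πC c))).trans_le (hcol _)⟩

end Relabel

section Convexity

variable {n m : ℕ}

lemma convex_setOf_isRandMatching :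
    Convex ℝ {r : Fin n → Fin m → ℝ | IsRandMatching r} := by
  rintro r ⟨hnonneg, hrow, hcol⟩ r' ⟨hnonneg', hrow', hcol'⟩ a b ha hb hab
  have hIic : Convex ℝ (Set.Iic (1 : ℝ)) := convex_Iic 1
  refine ⟨fun s c => convex_Ici (0 : ℝ) (hnonneg s c) (hnonneg' s c) ha hb hab,
    fun s => ?_, fun c => ?_⟩
  · simpa [sum_add_distrib, mul_sum] using
      hIic (Set.mem_Iic.2 (hrow s)) (Set.mem_Iic.2 (hrow' s)) ha hb hab
  · simpa [sum_add_distrib, mul_sum] using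
      hIic (Set.mem_Iic.2 (hcol c)) (Set.mem_Iic.2 (hcol' c)) ha hb hab

lemma convex_setOf_twoSidedSP : Convex ℝ {g : Mechanism n m | TwoSidedSP g} := by
  rintro g ⟨hstudent, hschool⟩ g' ⟨hstudent', hschool'⟩ a b ha hb -
  constructor
  · intro p s q c
    simp only [Pi.add_apply, Pi.smul_apply, sum_add_distrib, ← smul_sum]
    exact add_le_add (smul_le_smul_of_nonneg_left (hstudent p s q c) ha)
      (smul_le_smul_of_nonneg_left (hstudent' p s q c) hb)
  · intro p c q s
    simp only [Pi.add_apply, Pi.smul_apply, sum_add_distrib, ← smul_sum]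
    exact add_le_add (smul_le_smul_of_nonneg_left (hschool p c q s) ha)
      (smul_le_smul_of_nonneg_left (hschool' p c q s) hb)

lemma convexOn_violation (p : Profile n m) : ConvexOn ℝ Set.univ (violation p) := by
  have hmax : ConvexOn ℝ Set.univ fun x : ℝ => max x 0 :=
    (convexOn_id convex_univ).sup (convexOn_const 0 convex_univ)
  refine ⟨convex_univ, fun r _ r' _ a b ha hb hab => ?_⟩
  simp only [violation, smul_sum, ← sum_add_distrib]
  gcongr with s _ c _
  refine le_of_eq_of_le ?_ (hmax.2 (Set.mem_univ _) (Set.mem_univ _) ha hb hab)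
  simp only [Pi.add_apply, Pi.smul_apply, sum_add_distrib, smul_eq_mul, ← mul_sum]
  congr 1
  -- The first argument of `max` is affine in the matching; its constant `1` needs `a + b = 1`.
  linear_combination -hab

end Convexity

namespace Mechanism

variable {n m : ℕ} (f : Mechanism n m)

/-- The mechanism that renames the agents by `(πS, πC)`, runs `f`, and undoes the renaming. -/
def pullback (πS : Equiv.Perm (Fin n)) (πC : Equiv.Perm (Fin m)) : Mechanism n m :=
  fun p s c => f (relabel πS πC p) (πS s) (πC c)

/-- The symmetrization of `f`: its uniform average over all renamings of the agents. -/
noncomputable def anonymization : Mechanism n m :=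
  𝔼 π : Equiv.Perm (Fin n) × Equiv.Perm (Fin m), f.pullback π.1 π.2

lemma pullback_relabel_apply (πS σS : Equiv.Perm (Fin n)) (πC σC : Equiv.Perm (Fin m))
    (p : Profile n m) (s : Fin n) (c : Fin m) :
    f.pullback πS πC (relabel σS σC p) (σS s) (σC c) =
      f.pullback (πS * σS) (πC * σC) p s c :=
  rfl

lemma anonymous_anonymization : Anonymous f.anonymization := by
  intro p πS πC s c
  simp only [anonymization, expect_apply]
  exact (Fintype.expect_equiv (Equiv.mulRight (πS, πC)) _ _ fun π =>
    pullback_relabel_apply f π.1 πS π.2 πC p s c).symm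

variable {f}

lemma twoSidedSP_pullback (hf : TwoSidedSP f) (πS : Equiv.Perm (Fin n))
    (πC : Equiv.Perm (Fin m)) : TwoSidedSP (f.pullback πS πC) := by
  constructor
  · intro p s q c
    have h := hf.1 (relabel πS πC p) (πS s) (πC.symm.trans q) (πC c)
    rwa [← relabel_update_fst, sum_filter_relabel_fst πS πC p (· ≤ ·),
      sum_filter_relabel_fst πS πC p (· ≤ ·)] at h
  · intro p c q s
    have h := hf.2 (relabel πS πC p) (πC c) (πS.symm.trans q) (πS s)
    rwa [← relabel_update_snd, sum_filter_relabel_snd πS πC p (· ≤ ·),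
      sum_filter_relabel_snd πS πC p (· ≤ ·)] at h

lemma anonymization_apply_mem {A : Set (Fin n → Fin m → ℝ)} (hA : Convex ℝ A) {p : Profile n m}
    (hf : ∀ πS πC, f.pullback πS πC p ∈ A) : f.anonymization p ∈ A := by
  rw [anonymization, expect_apply]
  exact expect_mem_of_convex hA univ_nonempty fun π _ => hf π.1 π.2

lemma isRandMatching_anonymization (hf : ∀ p, IsRandMatching (f p)) (p : Profile n m) :
    IsRandMatching (f.anonymization p) :=
  anonymization_apply_mem convex_setOf_isRandMatching fun _ _ => (hf _).comp_perm

lemma twoSidedSP_anonymization (hf : TwoSidedSP f) : TwoSidedSP f.anonymization :=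
  expect_mem_of_convex convex_setOf_twoSidedSP univ_nonempty fun π _ =>
    twoSidedSP_pullback hf π.1 π.2

lemma violation_anonymization_le {B : ℝ} (hf : ∀ p, violation p (f p) ≤ B) (p : Profile n m) :
    violation p (f.anonymization p) ≤ B := by
  have hconvex := (convexOn_violation p).convex_le B
  refine (anonymization_apply_mem hconvex fun πS πC => ⟨Set.mem_univ _, ?_⟩).2
  exact (violation_relabel πS πC p _).symm.trans_le (hf _)

end Mechanism

/-- Theorem 1 (worst-case): for any two-sided strategy-proof randomized matching
mechanism `f` there is a two-sided strategy-proof and anonymous randomized matching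
mechanism `g` whose worst-case stability violation over profiles is no larger. -/
theorem anonymization_worst_case (n m : ℕ) (f : Profile n m → Fin n → Fin m → ℝ)
    (hf : ∀ p, IsRandMatching (f p)) (hsp : TwoSidedSP f) :
    ∃ g : Profile n m → Fin n → Fin m → ℝ,
      (∀ p, IsRandMatching (g p)) ∧ TwoSidedSP g ∧ Anonymous g ∧
      (⨆ p : Profile n m, violation p (g p)) ≤ ⨆ p : Profile n m, violation p (f p) := by
  have hbdd : BddAbove (Set.range fun p : Profile n m => violation p (f p)) :=
    (Set.finite_range _).bddAbove
  exact ⟨Mechanism.anonymization f,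
    Mechanism.isRandMatching_anonymization hf,
    Mechanism.twoSidedSP_anonymization hsp,
    Mechanism.anonymous_anonymization f,
    ciSup_le (Mechanism.violation_anonymization_le (le_ciSup hbdd))⟩
end

section
/- For n = m = 2 there exists a deterministic matching mechanism that is simultaneously two-sided strategy-proof and stable (i.e., outputs a matching with no blocking pair at every profile). -/
/-!
The 2×2 market has only two matchings `μ` and `ν`, so a mechanism is a choice between two
alternatives. Choosing `ν` exactly when its supporters (the agents who rank their `ν`-partner
above their `μ`-partner) form a coalition from a fixed family closed under supersets leaves no
agent a profitable misreport: an agent can only withdraw support from the alternative they prefer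
or lend it to the other one.

Let a coalition win when it contains some pair matched by `ν`. Every possible blocking pair of `μ`
is matched by `ν`, so `ν` is chosen exactly when `μ` is blocked. A pair `(s, ν s)` blocking `μ`
then protects `ν`: a pair blocking `ν` is of the form `(t, μ t)` and avoids both `s` and `ν s`,
since these prefer `ν`; but `μ t ≠ ν s` leaves only `μ t = μ s`, that is `t = s`.
-/

open Finset

/-- Blocking pair for a deterministic matching `μ` (a bijection) at profile `p`. -/
abbrev IsBlocking {n : ℕ} (p : Profile n n) (μ : Equiv.Perm (Fin n)) (s c : Fin n) : Prop :=
  p.1 s c < p.1 s (μ s) ∧ p.2 c s < p.2 c (μ.symm c)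

/-- The 0–1 matrix encoding of a deterministic matching. -/
def permMatrix {n : ℕ} (μ : Equiv.Perm (Fin n)) : Fin n → Fin n → ℝ :=
  fun s c => if μ s = c then 1 else 0

section DeterministicMechanisms

variable {n : ℕ}

lemma sum_filter_permMatrix_row (μ : Equiv.Perm (Fin n)) (s : Fin n)
    (P : Fin n → Prop) [DecidablePred P] :
    ∑ c ∈ univ.filter P, permMatrix μ s c = if P (μ s) then 1 else 0 := by
  simp [permMatrix, Finset.sum_ite_eq]

lemma sum_filter_permMatrix_col (μ : Equiv.Perm (Fin n)) (c : Fin n)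
    (P : Fin n → Prop) [DecidablePred P] :
    ∑ s ∈ univ.filter P, permMatrix μ s c = if P (μ.symm c) then 1 else 0 := by
  simp [permMatrix, ← Equiv.eq_symm_apply, Finset.sum_ite_eq']

lemma forall_ite_le_ite_iff {ι β R : Type*} [Preorder β] [DecidableLE β] [PartialOrder R]
    [Zero R] [One R] [ZeroLEOneClass R] [NeZero (1 : R)] (r : ι → β) (i j : ι) :
    (∀ k, (if r j ≤ r k then (1 : R) else 0) ≤ if r i ≤ r k then 1 else 0) ↔ r i ≤ r j := by
  refine ⟨fun h => ?_, fun hij k => ?_⟩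
  · by_contra hij
    exact not_le_of_gt one_pos (by simpa only [le_refl, if_true, if_neg hij] using h j)
  · by_cases hjk : r j ≤ r k
    · simp [hjk, hij.trans hjk]
    · rw [if_neg hjk]
      split_ifs
      · exact zero_le_one
      · exact le_rfl

/-- The rank each agent gives to their partner under `μ` (smaller is better). The agents of both
sides are collected in one type: `Sum.inl` marks students and `Sum.inr` marks schools. -/
def partnerRank (p : Profile n n) (μ : Equiv.Perm (Fin n)) : Fin n ⊕ Fin n → Fin n :=
  Sum.elim (fun s => p.1 s (μ s)) (fun c => p.2 c (μ.symm c))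

theorem twoSidedSP_permMatrix_iff (g : Profile n n → Equiv.Perm (Fin n)) :
    TwoSidedSP (fun p => permMatrix (g p)) ↔
      (∀ p s q, partnerRank p (g p) (.inl s) ≤
        partnerRank p (g (Function.update p.1 s q, p.2)) (.inl s)) ∧
      (∀ p c q, partnerRank p (g p) (.inr c) ≤
        partnerRank p (g (p.1, Function.update p.2 c q)) (.inr c)) := by
  simp only [TwoSidedSP, sum_filter_permMatrix_row, sum_filter_permMatrix_col,
    forall_ite_le_ite_iff, partnerRank, Sum.elim_inl, Sum.elim_inr]

end DeterministicMechanisms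

section CommitteeRule

variable {n : ℕ} {p p' : Profile n n} {μ ν : Equiv.Perm (Fin n)}
  {W : Set (Set (Fin n ⊕ Fin n))} {a : Fin n ⊕ Fin n}

/-- The coalition of agents who strictly prefer their partner under `ν` to their partner
under `μ`. -/
def supporters (p : Profile n n) (μ ν : Equiv.Perm (Fin n)) : Set (Fin n ⊕ Fin n) :=
  {a | partnerRank p ν a < partnerRank p μ a}

lemma mem_supporters :
    a ∈ supporters p μ ν ↔ partnerRank p ν a < partnerRank p μ a :=
  Iff.rfl

lemma disjoint_supporters (p : Profile n n) (μ ν : Equiv.Perm (Fin n)) :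
    Disjoint (supporters p μ ν) (supporters p ν μ) :=
  Set.disjoint_left.2 fun _ hν hμ => lt_asymm (mem_supporters.1 hν) (mem_supporters.1 hμ)

lemma mem_supporters_update_student_iff (s : Fin n) (q : Equiv.Perm (Fin n)) (ha : a ≠ .inl s) :
    a ∈ supporters (Function.update p.1 s q, p.2) μ ν ↔ a ∈ supporters p μ ν := by
  rcases a with t | c
  · have hts : t ≠ s := fun h => ha (congrArg Sum.inl h)
    simp [mem_supporters, partnerRank, hts]
  · rfl

lemma mem_supporters_update_school_iff (c : Fin n) (q : Equiv.Perm (Fin n)) (ha : a ≠ .inr c) :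
    a ∈ supporters (p.1, Function.update p.2 c q) μ ν ↔ a ∈ supporters p μ ν := by
  rcases a with s | d
  · rfl
  · have hdc : d ≠ c := fun h => ha (congrArg Sum.inr h)
    simp [mem_supporters, partnerRank, hdc]

open Classical in
/-- The binary choice between `μ` and `ν` by a committee with winning coalitions `W`: the status quo
`μ` is replaced by `ν` exactly when the supporters of `ν` form a winning coalition. -/
noncomputable def committeeRule (μ ν : Equiv.Perm (Fin n)) (W : Set (Set (Fin n ⊕ Fin n)))
    (p : Profile n n) : Equiv.Perm (Fin n) :=
  if supporters p μ ν ∈ W then ν else μ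

lemma partnerRank_committeeRule_le (hW : IsUpperSet W)
    (hagree : ∀ b ≠ a, (b ∈ supporters p' μ ν ↔ b ∈ supporters p μ ν)) :
    partnerRank p (committeeRule μ ν W p) a ≤ partnerRank p (committeeRule μ ν W p') a := by
  unfold committeeRule
  split_ifs with hwin hwin' hwin'
  · exact le_rfl
  · by_contra! hlt
    have ha : a ∉ supporters p μ ν := fun hmem => (mem_supporters.1 hmem).asymm hlt
    have hsub : supporters p μ ν ⊆ supporters p' μ ν := fun b hb =>
      (hagree b (ne_of_mem_of_not_mem hb ha)).2 hb
    exact hwin' (hW hsub hwin)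
  · by_contra! hlt
    have ha : a ∈ supporters p μ ν := mem_supporters.2 hlt
    have hsub : supporters p' μ ν ⊆ supporters p μ ν := fun b hb => by
      by_cases hba : b = a
      · exact hba ▸ ha
      · exact (hagree b hba).1 hb
    exact hwin (hW hsub hwin')
  · exact le_rfl

theorem twoSidedSP_committeeRule (hW : IsUpperSet W) :
    TwoSidedSP (fun p => permMatrix (committeeRule μ ν W p)) :=
  (twoSidedSP_permMatrix_iff _).2
    ⟨fun _ s q => partnerRank_committeeRule_le hW
        fun _ => mem_supporters_update_student_iff s q,
      fun _ c q => partnerRank_committeeRule_le hW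
        fun _ => mem_supporters_update_school_iff c q⟩

end CommitteeRule

section Stability

variable {n : ℕ} {p : Profile n n} {μ ν : Equiv.Perm (Fin n)} {s c : Fin n}

lemma isBlocking_apply_iff :
    IsBlocking p μ s (ν s) ↔ .inl s ∈ supporters p μ ν ∧ .inr (ν s) ∈ supporters p μ ν := by
  simp [IsBlocking, mem_supporters, partnerRank]

lemma IsBlocking.ne_apply (h : IsBlocking p μ s c) : c ≠ μ s := by
  rintro rfl
  exact lt_irrefl _ h.1

lemma IsBlocking.ne_of_isBlocking_apply {t : Fin n} (hμ : IsBlocking p μ s (ν s))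
    (hν : IsBlocking p ν t (μ t)) : t ≠ s ∧ μ t ≠ ν s := by
  obtain ⟨hs, hνs⟩ := isBlocking_apply_iff.1 hμ
  obtain ⟨ht, hμt⟩ := isBlocking_apply_iff.1 hν
  have hdisj := disjoint_supporters p μ ν
  exact ⟨fun hts => hdisj.ne_of_mem hs ht (congrArg Sum.inl hts.symm),
    fun hμν => hdisj.ne_of_mem hνs hμt (congrArg Sum.inr hμν.symm)⟩

/-- The coalitions containing both members of some pair matched by `ν`. -/
def pairCoalitions (ν : Equiv.Perm (Fin n)) : Set (Set (Fin n ⊕ Fin n)) :=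
  {A | ∃ s, .inl s ∈ A ∧ .inr (ν s) ∈ A}

lemma isUpperSet_pairCoalitions (ν : Equiv.Perm (Fin n)) : IsUpperSet (pairCoalitions ν) :=
  fun _ _ hAB ⟨s, hs, hνs⟩ => ⟨s, hAB hs, hAB hνs⟩

lemma supporters_mem_pairCoalitions_iff :
    supporters p μ ν ∈ pairCoalitions ν ↔ ∃ s, IsBlocking p μ s (ν s) := by
  simp only [pairCoalitions, Set.mem_ofPred_eq, isBlocking_apply_iff]

theorem not_isBlocking_committeeRule_pairCoalitions (hcover : ∀ s c, c = μ s ∨ c = ν s) :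
    ¬ IsBlocking p (committeeRule μ ν (pairCoalitions ν) p) s c := by
  intro hblock
  unfold committeeRule at hblock
  split_ifs at hblock with hwin
  · obtain ⟨t, ht⟩ := supporters_mem_pairCoalitions_iff.1 hwin
    obtain rfl : c = μ s := (hcover s c).resolve_right hblock.ne_apply
    obtain ⟨hst, hμν⟩ := ht.ne_of_isBlocking_apply hblock
    exact hst (μ.injective ((hcover t (μ s)).resolve_right hμν))
  · obtain rfl : c = ν s := (hcover s c).resolve_left hblock.ne_apply
    exact hwin (supporters_mem_pairCoalitions_iff.2 ⟨s, hblock⟩)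

end Stability

/-- For the 2×2 market there exists a deterministic matching mechanism that is
two-sided strategy-proof and stable. -/
theorem exists_sp_stable_2x2 :
    ∃ g : Profile 2 2 → Equiv.Perm (Fin 2),
      TwoSidedSP (fun p => permMatrix (g p)) ∧
      ∀ p : Profile 2 2, ∀ s c, ¬ IsBlocking p (g p) s c := by
  have hcover : ∀ s c : Fin 2, c = (1 : Equiv.Perm (Fin 2)) s ∨ c = Equiv.swap 0 1 s := by decide
  exact ⟨committeeRule 1 (Equiv.swap 0 1) (pairCoalitions (Equiv.swap 0 1)),
    twoSidedSP_committeeRule (isUpperSet_pairCoalitions _),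
    fun _ _ _ => not_isBlocking_committeeRule_pairCoalitions hcover⟩
end
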